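/- For every real ε > 0 and every positive irrational real number α, there exists a nonzero integer vector (x, y, z) ∈ ℤ³ such that |x² + y² − α z²| ≤ ε. -/

import Mathlib

/-!
A multiple of `x² + y² - α z²` is the pullback of `y² - 2xz` by an element of `SL(3, ℝ)`, that is,
the restriction of `y² - 2xz` to a unimodular lattice. Suppose that its nonzero integral values are
bounded away from zero. By Mahler's criterion the orbit of this lattice under a unipotent
one-parameter group preserving the form is relatively compact, so its closure contains a compact
minimal set `Y`. Following Dani and Margulis, one studies the elements `g` near `1` that move a
point of `Y` into `Y`. A form near a form `y² - 2xz + s z²` fixed by the flow either is of this type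
or drifts polynomially along the flow until it is close to a fixed form with another prescribed
value of `s`; as some fixed forms vanish on a lattice of `Y`, only the first case is possible, and
`g` takes fixed forms to fixed forms. As `α` is irrational, the form has finitely many integral
automorphs, so `g` can be chosen to change `s`. Hence `Y` is bounded below for infinitely many
values of `s` accumulating at the original one, which forces `g` to be upper triangular. Up to the
flow, `g` is conjugate to an integral matrix `γ`. Integrality of the trace then makes `γ` unipotent,
and `(γ - 1) ^ 2` has a nonzero integral column on which the form vanishes, a contradiction.
-/

open Filter Matrix Polynomial Set Topology
open scoped MatrixGroups

namespace Oppenheim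

local notation:max γ "ᴿ" => Matrix.map γ (Int.cast : ℤ → ℝ)

/-! ### Minimal sets of flows -/

section MinimalSet

variable {τ X : Type*} [TopologicalSpace τ] [AddMonoid τ] [TopologicalSpace X]

/-- A minimal set of a flow: minimal among its nonempty closed invariant sets. -/
def IsMinimalSet (φ : Flow τ X) (Y : Set X) : Prop :=
  Minimal (fun Z => IsClosed Z ∧ Z.Nonempty ∧ IsInvariant φ Z) Y

variable {φ : Flow τ X} {Y Z K : Set X}

theorem IsMinimalSet.subset_of_inter_nonempty (hY : IsMinimalSet φ Y) (hZ : IsClosed Z)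
    (hinv : IsInvariant φ Z) (hne : (Y ∩ Z).Nonempty) : Y ⊆ Z :=
  (hY.le_of_le ⟨hY.prop.1.inter hZ, hne, fun t _ hx => ⟨hY.prop.2.2 t hx.1, hinv t hx.2⟩⟩
    inter_subset_left).trans inter_subset_right

theorem exists_isMinimalSet_subset (hK : IsCompact K) (hclosed : IsClosed K)
    (hne : K.Nonempty) (hinv : IsInvariant φ K) : ∃ Y ⊆ K, IsMinimalSet φ Y := by
  let S : Set (Set X) := {Z | (IsClosed Z ∧ Z.Nonempty ∧ IsInvariant φ Z) ∧ Z ⊆ K}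
  have hbound : ∀ c ⊆ S, IsChain (· ⊆ ·) c → c.Nonempty → ∃ L ∈ S, ∀ Z ∈ c, L ⊆ Z := by
    rintro c hc hchain ⟨Z₀, hZ₀⟩
    have : Nonempty c := ⟨⟨Z₀, hZ₀⟩⟩
    have hdir : DirectedOn (· ⊇ ·) c := IsChain.directedOn hchain.symm
    have hinter : (⋂₀ c).Nonempty :=
      IsCompact.nonempty_sInter_of_directed_nonempty_isCompact_isClosed hdir
        (fun Z hZ => (hc hZ).1.2.1) (fun Z hZ => hK.of_isClosed_subset (hc hZ).1.1 (hc hZ).2)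
        fun Z hZ => (hc hZ).1.1
    exact ⟨⋂₀ c, ⟨⟨isClosed_sInter fun Z hZ => (hc hZ).1.1, hinter,
      fun t x hx Z hZ => (hc hZ).1.2.2 t (hx Z hZ)⟩, (sInter_subset_of_mem hZ₀).trans (hc hZ₀).2⟩,
      fun Z hZ => sInter_subset_of_mem hZ⟩
  obtain ⟨Y, hYK, hY⟩ := zorn_superset_nonempty S hbound K ⟨⟨hclosed, hne, hinv⟩, Subset.rfl⟩
  exact ⟨Y, hYK, hY.prop.1, fun Z hZ hZY => hY.le_of_le ⟨hZ, hZY.trans hYK⟩ hZY⟩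

theorem IsMinimalSet.mapClusterPt {f : Filter τ} [f.NeBot] (hf : ∀ t : τ, Tendsto (t + ·) f f)
    (hY : IsMinimalSet φ Y) (hc : IsCompact Y) {y : X} (hy : y ∈ Y) :
    MapClusterPt y f fun t => φ t y := by
  rw [← mem_omegaLimit_singleton_iff_mapClusterPt]
  have horbit : closure (image2 φ univ {y}) ⊆ Y :=
    hY.prop.1.closure_subset_iff.2 <| image2_subset_iff.2 fun t _ x hx =>
      hY.prop.2.2 t ((mem_singleton_iff.1 hx).symm ▸ hy)
  have hne : (omegaLimit f φ {y}).Nonempty :=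
    nonempty_omegaLimit_of_isCompact_absorbing f φ _ hc ⟨univ, univ_mem, horbit⟩
      (singleton_nonempty y)
  have hsub : omegaLimit f φ {y} ⊆ Y :=
    (omegaLimit_subset_closure_image2 f φ _ univ_mem).trans horbit
  exact hY.subset_of_inter_nonempty (isClosed_omegaLimit f φ _)
    (φ.isInvariant_omegaLimit f _ hf) (by rwa [inter_eq_right.2 hsub]) hy

theorem isInvariant_closure (hZ : IsInvariant φ Z) : IsInvariant φ (closure Z) :=
  fun t => (hZ t).closure (φ.continuous_toFun t)

end MinimalSet

/-! ### Quadratic forms and reduction theory -/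

section Forms

variable {m n R : Type*} [Fintype m] [Fintype n] [CommRing R]

/-- The value at `x` of the quadratic form with Gram matrix `A`. -/
def quad (A : Matrix n n R) (x : n → R) : R := x ⬝ᵥ A *ᵥ x

/-- The Gram matrix of the form `A` in the coordinates given by the columns of `g`. -/
def pullback (A : Matrix n n R) (g : Matrix n n R) : Matrix n n R := gᵀ * A * g

variable (A : Matrix n n R) (g h : Matrix n n R)

theorem quad_mulVec (x : n → R) : quad A (g *ᵥ x) = quad (pullback A g) x := by
  simp only [quad, pullback, ← mulVec_mulVec, dotProduct_mulVec, vecMul_transpose]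

theorem quad_smul (c : R) (x : n → R) : quad A (c • x) = c ^ 2 * quad A x := by
  simp only [quad, mulVec_smul, dotProduct_smul, smul_dotProduct, smul_eq_mul]
  ring

theorem quad_smul_left (c : R) (x : n → R) : quad (c • A) x = c * quad A x := by
  simp only [quad, smul_mulVec, dotProduct_smul, smul_eq_mul]

theorem quad_diagonal [DecidableEq n] (d x : n → R) :
    quad (diagonal d) x = ∑ i, d i * x i ^ 2 := by
  simp only [quad, dotProduct, mulVec_diagonal]
  exact Finset.sum_congr rfl fun i _ => by ring

theorem pullback_mul : pullback A (g * h) = pullback (pullback A g) h := by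
  simp only [pullback, transpose_mul, Matrix.mul_assoc]

theorem pullback_map_mul (S : Matrix n n ℝ) (γ δ : Matrix n n ℤ) :
    pullback S (γ * δ)ᴿ = pullback (pullback S γᴿ) δᴿ := by
  rw [← pullback_mul]
  exact congrArg (pullback S) (Matrix.map_mul (f := Int.castRingHom ℝ))

theorem det_pullback [DecidableEq n] : (pullback A g).det = A.det * g.det ^ 2 := by
  simp only [pullback, det_mul, det_transpose]; ring

variable {A}

theorem isSymm_pullback (hA : A.IsSymm) : (pullback A g).IsSymm := by
  simp only [IsSymm, pullback, transpose_mul, transpose_transpose, hA.eq, Matrix.mul_assoc]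

variable (A) in
theorem pullback_fromBlocks [DecidableEq m] (C : Matrix m m R) (w : Matrix m n R) :
    pullback (fromBlocks C 0 0 A) (fromBlocks 1 w 0 g) =
      fromBlocks C (C * w) (wᵀ * C) (wᵀ * C * w + pullback A g) := by
  simp [pullback, fromBlocks_transpose, fromBlocks_multiply, Matrix.mul_assoc]

theorem exists_fromBlocks_eq_pullback [DecidableEq m] [DecidableEq n] {C : Matrix m m R}
    {B : Matrix m n R} {B' : Matrix n m R} {D : Matrix n n R} (hT : (fromBlocks C B B' D).IsSymm)
    (hunit : IsUnit C.det) :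
    ∃ (c : Matrix m n R) (S : Matrix n n R), S.IsSymm ∧
      fromBlocks C B B' D = pullback (fromBlocks C 0 0 S) (fromBlocks 1 c 0 1) := by
  obtain ⟨hC, rfl, -, hD⟩ := isSymm_fromBlocks_iff.1 hT
  have hCi : C⁻¹ᵀ = C⁻¹ := by rw [transpose_nonsing_inv, hC.eq]
  refine ⟨C⁻¹ * B, D - Bᵀ * C⁻¹ * B, ?_, ?_⟩
  · simp [IsSymm, hD.eq, hCi, Matrix.mul_assoc]
  · simp only [pullback_fromBlocks, transpose_mul, hCi, Matrix.mul_assoc, nonsing_inv_mul C hunit,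
      mul_nonsing_inv_cancel_left _ _ hunit, Matrix.mul_one]
    simp [pullback]

end Forms

section Reduction

theorem exists_forall_le_two_mul {ι : Type*} [Nonempty ι] {f : ι → ℝ} {c : ℝ} (hc : 0 < c)
    (hf : ∀ i, c ≤ f i) : ∃ i, ∀ j, f i ≤ 2 * f j := by
  have hpos : 0 < ⨅ i, f i := hc.trans_le (le_ciInf hf)
  obtain ⟨i, hi⟩ := exists_lt_of_ciInf_lt (lt_two_mul_self hpos)
  exact ⟨i, fun j => hi.le.trans (by gcongr; exact ciInf_le ⟨c, forall_mem_range.2 hf⟩ j)⟩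

variable {ι κ : Type*} [Fintype ι] [DecidableEq ι] [Fintype κ] [DecidableEq κ]

/-- `BasisValuesGE S η` says that the form `S` takes values at least `η` on every vector that
belongs to a basis of the integer lattice. -/
def BasisValuesGE (S : Matrix ι ι ℝ) (η : ℝ) : Prop :=
  ∀ γ : Matrix ι ι ℤ, IsUnit γ.det → ∀ j, η ≤ pullback S γᴿ j j

variable (ι) in
/-- Reduction theory in the variables `ι`: a lower bound for the values on basis vectors and an
upper bound for the determinant yield an integral basis on which the values are bounded. -/
def HasReducedBases : Prop :=
  ∀ η > 0, ∀ D : ℝ, ∃ R : ℝ, ∀ S : Matrix ι ι ℝ, S.IsSymm → S.det ≤ D → BasisValuesGE S η →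
    ∃ γ : Matrix ι ι ℤ, IsUnit γ.det ∧ ∀ j, pullback S γᴿ j j ≤ R

theorem det_pullback_map {γ : Matrix ι ι ℤ} (hγ : IsUnit γ.det) (S : Matrix ι ι ℝ) :
    (pullback S γᴿ).det = S.det := by
  have hdet : γᴿ.det = (γ.det : ℝ) := ((Int.castRingHom ℝ).map_det γ).symm
  obtain h | h := Int.isUnit_iff.1 hγ <;> simp [det_pullback, hdet, h]

theorem HasReducedBases.of_equiv (e : ι ≃ κ) (h : HasReducedBases ι) : HasReducedBases κ := by
  have hsub (S : Matrix κ κ ℝ) (γ : Matrix ι ι ℤ) : pullback (S.submatrix e e) γᴿ =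
      (pullback S (γ.submatrix e.symm e.symm)ᴿ).submatrix e e := by
    simp [pullback, ← submatrix_mul_equiv _ _ e e e, transpose_submatrix, ← submatrix_map]
  intro η hη D
  obtain ⟨R, hR⟩ := h η hη D
  refine ⟨R, fun S hS hdet hval => ?_⟩
  obtain ⟨γ, hγ, hγR⟩ := hR (S.submatrix e e) (hS.submatrix e) (by simpa using hdet)
    fun γ hγ j => by simpa [hsub] using hval (γ.submatrix e.symm e.symm) (by simpa using hγ) (e j)
  exact ⟨γ.submatrix e.symm e.symm, by simpa using hγ, fun j => by
    simpa [hsub] using hγR (e.symm j)⟩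

theorem BasisValuesGE.exists_near_minimal {S : Matrix ι ι ℝ} {η : ℝ} (hη : 0 < η)
    (hS : BasisValuesGE S η) (i : ι) : ∃ γ : Matrix ι ι ℤ, IsUnit γ.det ∧
      ∀ δ : Matrix ι ι ℤ, IsUnit δ.det → ∀ j, pullback S γᴿ i i ≤ 2 * pullback S δᴿ j j := by
  let Basis := {γ : Matrix ι ι ℤ // IsUnit γ.det}
  have : Nonempty (Basis × ι) := ⟨⟨1, by simp⟩, i⟩
  obtain ⟨⟨γ, k⟩, hmin⟩ := exists_forall_le_two_mul (f := fun p : Basis × ι =>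
    pullback S (p.1 : Matrix ι ι ℤ)ᴿ p.2 p.2) hη fun p => hS p.1 p.1.2 p.2
  refine ⟨(γ : Matrix ι ι ℤ).submatrix id (Equiv.swap i k), ?_, fun δ hδ j => ?_⟩
  · rw [det_permute']
    exact (Units.isUnit _).mul γ.2
  · have hswap : pullback S ((γ : Matrix ι ι ℤ).submatrix id (Equiv.swap i k))ᴿ i i =
        pullback S (γ : Matrix ι ι ℤ)ᴿ k k := by
      simp [pullback, mul_apply]
    exact hswap ▸ hmin ⟨⟨δ, hδ⟩, j⟩

/-- The integral translation in a column operation can be rounded so that the square completed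
against a pivot of value `a` contributes at most `a / 4`. -/
theorem exists_pullback_fromBlocks_le {a : ℝ} (ha : 0 ≤ a) (c : Matrix Unit ι ℝ)
    (S : Matrix ι ι ℝ) {γ : Matrix ι ι ℤ} (hγ : IsUnit γ.det) :
    ∃ δ : Matrix (Unit ⊕ ι) (Unit ⊕ ι) ℤ, IsUnit δ.det ∧
      pullback (pullback (fromBlocks (of fun _ _ => a) 0 0 S) (fromBlocks 1 c 0 1)) δᴿ
        (.inl ()) (.inl ()) = a ∧
      ∀ j, pullback (pullback (fromBlocks (of fun _ _ => a) 0 0 S) (fromBlocks 1 c 0 1)) δᴿ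
        (.inr j) (.inr j) ≤ a / 4 + pullback S γᴿ j j := by
  let v : Matrix Unit ι ℤ := of fun i j => -round ((c * γᴿ) i j)
  let w : Matrix Unit ι ℝ := vᴿ + c * γᴿ
  let δ : Matrix (Unit ⊕ ι) (Unit ⊕ ι) ℤ := fromBlocks 1 v 0 γ
  have hmul : fromBlocks 1 c 0 1 * δᴿ = fromBlocks 1 w 0 γᴿ := by
    simp [δ, w, fromBlocks_map, fromBlocks_multiply]
  refine ⟨δ, by simpa [δ] using hγ, ?_, fun j => ?_⟩ <;>
    rw [← pullback_mul, hmul, pullback_fromBlocks]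
  · simp
  · have hround : |w () j| ≤ 1 / 2 := by
      simpa [v, w, neg_add_eq_sub] using abs_sub_round ((c * γᴿ) () j)
    have hsq : w () j ^ 2 ≤ 1 / 4 := by
      rw [← sq_abs]; nlinarith [abs_nonneg (w () j)]
    have hval : (wᵀ * (of fun _ _ => a : Matrix Unit Unit ℝ) * w) j j = a * w () j ^ 2 := by
      simp only [mul_apply, Finset.univ_unique, Finset.sum_singleton, transpose_apply, of_apply,
        PUnit.default_eq_unit]
      ring
    rw [fromBlocks_apply₂₂, Matrix.add_apply, hval]
    nlinarith

/-- Completing the square at a nearly minimal basis vector, the complementary form inherits a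
lower bound from the rounding in `exists_pullback_fromBlocks_le`. -/
theorem BasisValuesGE.exists_complete_square {S : Matrix (Unit ⊕ ι) (Unit ⊕ ι) ℝ} {η : ℝ}
    (hη : 0 < η) (hS : S.IsSymm) (hval : BasisValuesGE S η) :
    ∃ γ : Matrix (Unit ⊕ ι) (Unit ⊕ ι) ℤ, IsUnit γ.det ∧ ∃ a ≥ η, ∃ (c : Matrix Unit ι ℝ)
      (T : Matrix ι ι ℝ), T.IsSymm ∧ BasisValuesGE T (a / 4) ∧
        pullback S γᴿ = pullback (fromBlocks (of fun _ _ => a) 0 0 T) (fromBlocks 1 c 0 1) := by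
  obtain ⟨γ, hγ, hmin⟩ := hval.exists_near_minimal hη (.inl ())
  obtain ⟨A, B, B', C, hblocks⟩ : ∃ A B B' C, pullback S γᴿ = fromBlocks A B B' C :=
    ⟨_, _, _, _, (fromBlocks_toBlocks _).symm⟩
  obtain ⟨a, rfl⟩ : ∃ a : ℝ, A = of fun _ _ => a := ⟨A () (), rfl⟩
  have haval : pullback S γᴿ (.inl ()) (.inl ()) = a := by simp [hblocks]
  have ha : η ≤ a := haval ▸ hval γ hγ _
  obtain ⟨c, T, hT, hsquare⟩ := exists_fromBlocks_eq_pullback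
    (hblocks ▸ isSymm_pullback γᴿ hS) (by simpa using (hη.trans_le ha).ne')
  rw [hsquare] at hblocks
  refine ⟨γ, hγ, a, ha, c, T, hT, fun δ hδ j => ?_, hblocks⟩
  obtain ⟨δ', hδ', -, hle⟩ := exists_pullback_fromBlocks_le (hη.le.trans ha) c T hδ
  have hcompare := hmin (γ * δ') (by simpa using hγ.mul hδ') (.inr j)
  rw [pullback_map_mul, haval, hblocks] at hcompare
  linarith [hle j]

theorem HasReducedBases.unit_sum (h : HasReducedBases ι) : HasReducedBases (Unit ⊕ ι) := by
  intro η hη D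
  obtain ⟨R, hR⟩ := h (η / 4) (by positivity) (max D 0 / η)
  refine ⟨max D (4 * R), fun S hS hdet hval => ?_⟩
  obtain ⟨γ, hγ, a, ha, c, T, hT, hlow, hsquare⟩ := hval.exists_complete_square hη hS
  have hdetS : S.det = a * T.det := by
    rw [← det_pullback_map hγ, hsquare, det_pullback]; simp
  have hdetT : T.det ≤ max D 0 / η := by
    rw [le_div_iff₀ hη, le_max_iff]
    rcases le_total T.det 0 with hneg | hpos
    · exact .inr (mul_nonpos_of_nonpos_of_nonneg hneg hη.le)
    · exact .inl (by nlinarith)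
  obtain ⟨δ, hδ, hδR⟩ := hR T hT hdetT fun δ hδ j => by linarith [hlow δ hδ j]
  obtain ⟨δ', hδ', hinl, hinr⟩ := exists_pullback_fromBlocks_le (hη.le.trans ha) c T hδ
  refine ⟨γ * δ', by simpa using hγ.mul hδ', ?_⟩
  rw [pullback_map_mul, hsquare]
  rintro (⟨⟩ | j)
  · rw [hinl]
    rcases isEmpty_or_nonempty ι with _ | ⟨⟨j⟩⟩
    · simpa [hdetS] using Or.inl hdet
    · exact le_max_of_le_right (by linarith [hlow δ hδ j, hδR j])
  · exact le_max_of_le_right (by linarith [hlow δ hδ j, hδR j, hinr j])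

theorem hasReducedBases (ι : Type*) [Fintype ι] [DecidableEq ι] : HasReducedBases ι := by
  have hfin (n : ℕ) : HasReducedBases (Fin n) := by
    induction n with
    | zero => exact fun _ _ _ => ⟨0, fun _ _ _ _ => ⟨1, by simp, by simp⟩⟩
    | succ n ih =>
      exact ih.unit_sum.of_equiv <| Fintype.equivOfCardEq (by simp [add_comm])
  exact (hfin _).of_equiv (Fintype.equivFin ι).symm

end Reduction

/-! ### The space of lattices -/

section Lattices

theorem intCast_comp_single {ι : Type*} [DecidableEq ι] (j : ι) :
    (Int.cast ∘ (Pi.single j 1 : ι → ℤ) : ι → ℝ) = Pi.single j 1 := by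
  ext i; simp [Pi.single_apply]

variable {ι : Type*} [Fintype ι]

theorem intCast_comp_mulVec (γ : Matrix ι ι ℤ) (m : ι → ℤ) :
    (Int.cast ∘ (γ *ᵥ m) : ι → ℝ) = γᴿ *ᵥ (Int.cast ∘ m) :=
  funext fun i => (Int.castRingHom ℝ).map_mulVec γ m i

variable [DecidableEq ι]

variable (ι) in
/-- The space of unimodular lattices in `ℝ^ι`: the class of `g` stands for the lattice spanned by
the columns of `g`. -/
abbrev Lattices : Type _ :=
  SpecialLinearGroup ι ℝ ⧸ (SpecialLinearGroup.map (n := ι) (Int.castRingHom ℝ)).range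

/-- The lattices on whose nonzero vectors the form `A` has absolute value at least `ε`. -/
def valuesGE (A : Matrix ι ι ℝ) (ε : ℝ) : Set (Lattices ι) :=
  {x | ∀ g : SpecialLinearGroup ι ℝ, (g : Lattices ι) = x →
    ∀ m : ι → ℤ, m ≠ 0 → ε ≤ |quad (pullback A g) (Int.cast ∘ m)|}

theorem mk_eq_mk_iff {g h : SpecialLinearGroup ι ℝ} :
    (g : Lattices ι) = h ↔ ∃ γ : SpecialLinearGroup ι ℤ, h = g * γ := by
  simp only [QuotientGroup.eq, MonoidHom.mem_range, eq_comm (b := g⁻¹ * h), inv_mul_eq_iff_eq_mul]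

theorem mulVec_ne_zero_of_isUnit_det {γ : Matrix ι ι ℤ} (hγ : IsUnit γ.det) {m : ι → ℤ}
    (hm : m ≠ 0) : γ *ᵥ m ≠ 0 := fun h0 =>
  hm (by simpa [mulVec_mulVec, nonsing_inv_mul γ hγ] using congrArg (γ⁻¹ *ᵥ ·) h0)

theorem mk_mem_valuesGE {A : Matrix ι ι ℝ} {ε : ℝ} {g : SpecialLinearGroup ι ℝ} :
    (g : Lattices ι) ∈ valuesGE A ε ↔
      ∀ m : ι → ℤ, m ≠ 0 → ε ≤ |quad (pullback A g) (Int.cast ∘ m)| := by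
  refine ⟨fun h => h g rfl, fun hg h hgh m hm => ?_⟩
  obtain ⟨γ, rfl⟩ := mk_eq_mk_iff.1 hgh.symm
  have hγm := hg _ (mulVec_ne_zero_of_isUnit_det (γ := γ) (by simp) hm)
  rwa [intCast_comp_mulVec, quad_mulVec, ← pullback_mul] at hγm

theorem mk_mul (g h : SpecialLinearGroup ι ℝ) :
    ((g * h : SpecialLinearGroup ι ℝ) : Lattices ι) = g • (h : Lattices ι) :=
  rfl

theorem smul_mk_eq_smul_mk_iff {g h x y : SpecialLinearGroup ι ℝ} :
    g • (x : Lattices ι) = h • (y : Lattices ι) ↔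
      ∃ γ : SpecialLinearGroup ι ℤ, h * y = g * x * γ := by
  rw [← mk_mul, ← mk_mul, mk_eq_mk_iff]

theorem smul_mem_valuesGE {A : Matrix ι ι ℝ} {ε : ℝ} {g : SpecialLinearGroup ι ℝ}
    {x : Lattices ι} : g • x ∈ valuesGE A ε ↔ x ∈ valuesGE (pullback A g) ε := by
  obtain ⟨h, rfl⟩ := QuotientGroup.mk_surjective x
  rw [← mk_mul, mk_mem_valuesGE, mk_mem_valuesGE, Matrix.SpecialLinearGroup.coe_mul,
    pullback_mul]

theorem isClosed_setOf_mem_valuesGE (ε : ℝ) :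
    IsClosed {p : Matrix ι ι ℝ × Lattices ι | p.2 ∈ valuesGE p.1 ε} := by
  have hquot : IsOpenQuotientMap (Prod.map id ((↑) : SpecialLinearGroup ι ℝ → Lattices ι) :
    Matrix ι ι ℝ × _ → _) := IsOpenQuotientMap.id.prodMap QuotientGroup.isOpenQuotientMap_mk
  rw [← hquot.isQuotientMap.isClosed_preimage]
  simp only [preimage_ofPred_eq, Prod.map_snd, Prod.map_fst, mk_mem_valuesGE, id, ofPred_forall]
  refine isClosed_iInter fun m => isClosed_iInter fun _ => isClosed_le continuous_const ?_
  simp only [quad, pullback]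
  fun_prop

theorem isClosed_valuesGE (A : Matrix ι ι ℝ) (ε : ℝ) : IsClosed (valuesGE A ε) :=
  (isClosed_setOf_mem_valuesGE ε).preimage (Continuous.prodMk_right A)

theorem exists_specialLinearGroup_pullback_diag_eq (S : Matrix ι ι ℝ) {γ : Matrix ι ι ℤ}
    (hγ : IsUnit γ.det) :
    ∃ δ : SpecialLinearGroup ι ℤ, ∀ j, pullback S (δ : Matrix ι ι ℤ)ᴿ j j = pullback S γᴿ j j := by
  obtain hdet | hdet := Int.isUnit_iff.1 hγ
  · exact ⟨⟨γ, hdet⟩, fun _ => rfl⟩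
  have : Nonempty ι := by
    by_contra! hempty
    simp at hdet
  obtain ⟨i⟩ := this
  let s : ι → ℤ := Function.update 1 i (-1)
  have hs (j : ι) : (s j : ℝ) * s j = 1 := by
    by_cases hj : j = i <;> simp [s, hj]
  refine ⟨⟨γ * diagonal s, ?_⟩, fun j => ?_⟩
  · simp [hdet, s, Finset.prod_update_of_mem]
  · have hdiag : (diagonal s)ᴿ = diagonal fun j => (s j : ℝ) := by simp [diagonal_map]
    rw [pullback_map_mul, hdiag]
    simp only [pullback, diagonal_transpose, mul_diagonal, diagonal_mul]
    linear_combination (γᴿᵀ * S * γᴿ) j j * hs j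

theorem quad_single (A : Matrix ι ι ℝ) (j : ι) : quad A (Pi.single j 1) = A j j := by
  simp [quad]

theorem quad_one (v : ι → ℝ) : quad 1 v = ∑ i, v i ^ 2 := by
  simp [quad, dotProduct, sq]

theorem sq_apply_le_pullback_one (g : Matrix ι ι ℝ) (i j : ι) : g i j ^ 2 ≤ pullback 1 g j j := by
  rw [← quad_single (pullback 1 g), ← quad_mulVec, quad_one, mulVec_single_one]
  exact Finset.single_le_sum (f := fun k => g k j ^ 2) (fun k _ => sq_nonneg _) (Finset.mem_univ i)

theorem exists_abs_quad_le (A : Matrix ι ι ℝ) : ∃ C > 0, ∀ v, |quad A v| ≤ C * quad 1 v := by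
  refine ⟨1 + ∑ i, ∑ j, |A i j|, by positivity, fun v => ?_⟩
  have hcoord (i : ι) : v i ^ 2 ≤ quad 1 v := by
    rw [quad_one]
    exact Finset.single_le_sum (fun j _ => sq_nonneg (v j)) (Finset.mem_univ i)
  have hprod (i j : ι) : |v i * v j| ≤ quad 1 v := by
    rw [abs_mul]
    nlinarith [hcoord i, hcoord j, sq_nonneg (|v i| - |v j|), sq_abs (v i), sq_abs (v j)]
  have hsum : quad A v = ∑ i, ∑ j, A i j * (v i * v j) := by
    simp only [quad, dotProduct, mulVec, Finset.mul_sum]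
    exact Finset.sum_congr rfl fun i _ => Finset.sum_congr rfl fun j _ => by ring
  have hnonneg : 0 ≤ quad 1 v := by rw [quad_one]; positivity
  calc |quad A v| ≤ ∑ i, ∑ j, |A i j| * quad 1 v := by
        rw [hsum]
        refine (Finset.abs_sum_le_sum_abs _ _).trans (Finset.sum_le_sum fun i _ => ?_)
        refine (Finset.abs_sum_le_sum_abs _ _).trans (Finset.sum_le_sum fun j _ => ?_)
        rw [abs_mul]
        gcongr
        exact hprod i j
    _ ≤ (1 + ∑ i, ∑ j, |A i j|) * quad 1 v := by
        simp only [← Finset.sum_mul]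
        linarith

theorem basisValuesGE_of_mk_mem_valuesGE_one {η : ℝ} {g : SpecialLinearGroup ι ℝ}
    (hg : (g : Lattices ι) ∈ valuesGE 1 η) : BasisValuesGE (pullback 1 (g : Matrix ι ι ℝ)) η := by
  intro γ hγ j
  have hcol := mk_mem_valuesGE.1 hg _ (mulVec_ne_zero_of_isUnit_det hγ
    (Pi.single_ne_zero_iff.2 one_ne_zero : Pi.single j 1 ≠ 0))
  rwa [abs_of_nonneg (by rw [← quad_mulVec, quad_one]; positivity), intCast_comp_mulVec,
    quad_mulVec, intCast_comp_single, quad_single] at hcol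

/-- **Mahler's compactness criterion.** -/
theorem isCompact_valuesGE_one {η : ℝ} (hη : 0 < η) :
    IsCompact (valuesGE (1 : Matrix ι ι ℝ) η) := by
  obtain ⟨R, hR⟩ := hasReducedBases ι η hη 1
  let K : Set (SpecialLinearGroup ι ℝ) :=
    (↑) ⁻¹' Set.pi univ fun _ : ι => Set.pi univ fun _ : ι => Icc (-√R) √R
  have hK : IsCompact K := SpecialLinearGroup.isClosedEmbedding_val.isCompact_preimage <|
    isCompact_univ_pi fun _ => isCompact_univ_pi fun _ => isCompact_Icc
  refine (hK.image QuotientGroup.continuous_mk).of_isClosed_subset (isClosed_valuesGE 1 η)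
    fun x hx => ?_
  obtain ⟨g, rfl⟩ := QuotientGroup.mk_surjective x
  obtain ⟨γ, hγ, hγR⟩ := hR (pullback 1 g) (isSymm_pullback _ isSymm_one) (by simp [det_pullback])
    (basisValuesGE_of_mk_mem_valuesGE_one hx)
  obtain ⟨δ, hδ⟩ := exists_specialLinearGroup_pullback_diag_eq (pullback 1 g) hγ
  refine ⟨g * δ, fun i _ j _ => abs_le.1 (Real.abs_le_sqrt ?_), (mk_eq_mk_iff.2 ⟨δ, rfl⟩).symm⟩
  refine (sq_apply_le_pullback_one _ i j).trans ?_
  rw [Matrix.SpecialLinearGroup.coe_mul, pullback_mul]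
  exact (hδ j).trans_le (hγR j)

theorem isCompact_valuesGE (A : Matrix ι ι ℝ) {ε : ℝ} (hε : 0 < ε) : IsCompact (valuesGE A ε) := by
  obtain ⟨C, hC, hle⟩ := exists_abs_quad_le A
  refine (isCompact_valuesGE_one (div_pos hε hC)).of_isClosed_subset (isClosed_valuesGE A ε)
    fun x hx => ?_
  obtain ⟨g, rfl⟩ := QuotientGroup.mk_surjective x
  rw [mk_mem_valuesGE] at hx ⊢
  intro m hm
  rw [div_le_iff₀' hC]
  calc ε ≤ |quad (pullback A g) (Int.cast ∘ m)| := hx m hm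
    _ ≤ C * quad (pullback 1 g) (Int.cast ∘ m) := by
        simpa only [← quad_mulVec] using hle _
    _ ≤ C * |quad (pullback 1 g) (Int.cast ∘ m)| := by gcongr; exact le_abs_self _

end Lattices

/-! ### Polynomials leaving an interval -/

section PolynomialExit

theorem exists_abs_coeff_le (d : ℕ) : ∃ C : ℝ, ∀ p : ℝ[X], p.natDegree ≤ d → ∀ M : ℝ,
    (∀ x ∈ Icc (0 : ℝ) 1, |p.eval x| ≤ M) → ∀ k, |p.coeff k| ≤ C * M := by
  let s := Finset.range (d + 1)
  let v : ℕ → ℝ := fun i => i / (d + 1)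
  have hv (i : ℕ) (hi : i ∈ s) : v i ∈ Icc (0 : ℝ) 1 := by
    refine ⟨by positivity, (div_le_one (by positivity)).2 ?_⟩
    exact_mod_cast (Finset.mem_range.1 hi).le
  have hinj : InjOn v s := fun i _ j _ hij => by
    simpa [v, div_left_inj' (Nat.cast_add_one_ne_zero d : (d + 1 : ℝ) ≠ 0)] using hij
  let c : ℕ → ℝ := fun k => ∑ i ∈ s, |(Lagrange.basis s v i).coeff k|
  have hc (k : ℕ) : 0 ≤ c k := Finset.sum_nonneg fun _ _ => abs_nonneg _
  refine ⟨∑ k ∈ s, c k, fun p hp M hM k => ?_⟩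
  have hM0 : 0 ≤ M := (abs_nonneg _).trans (hM 0 (by simp))
  obtain hk | hk := lt_or_ge d k
  · rw [coeff_eq_zero_of_natDegree_lt (hp.trans_lt hk), abs_zero]
    exact mul_nonneg (Finset.sum_nonneg fun k _ => hc k) hM0
  have hinterp : p = Lagrange.interpolate s v fun i => p.eval (v i) :=
    Lagrange.eq_interpolate hinj <| by
      rw [Finset.card_range]
      exact degree_le_natDegree.trans_lt (by exact_mod_cast Nat.lt_succ_of_le hp)
  calc |p.coeff k| = |∑ i ∈ s, p.eval (v i) * (Lagrange.basis s v i).coeff k| := by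
        conv_lhs => rw [hinterp]
        simp [Lagrange.interpolate_apply, finsetSum_coeff]
    _ ≤ ∑ i ∈ s, |(Lagrange.basis s v i).coeff k| * M := by
        refine (Finset.abs_sum_le_sum_abs _ _).trans (Finset.sum_le_sum fun i hi => ?_)
        rw [abs_mul, mul_comm]
        gcongr
        exact hM _ (hv i hi)
    _ ≤ (∑ k ∈ s, c k) * M := by
        rw [← Finset.sum_mul]
        refine mul_le_mul_of_nonneg_right ?_ hM0
        exact Finset.single_le_sum (fun k _ => hc k) (Finset.mem_range.2 (Nat.lt_succ_of_le hk))

theorem exists_abs_coeff_taylor_mul_pow_le (d : ℕ) : ∃ C : ℝ, ∀ p : ℝ[X], p.natDegree ≤ d →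
    ∀ M t : ℝ, 0 < t → (∀ x ∈ Icc 0 t, |p.eval x| ≤ M) →
      ∀ k, |(taylor t p).coeff k| * t ^ k ≤ C * M := by
  obtain ⟨C, hC⟩ := exists_abs_coeff_le d
  refine ⟨C, fun p hp M t ht hM k => ?_⟩
  let q : ℝ[X] := (taylor t p).comp (.C (-t) * X)
  have hq : q.natDegree ≤ d := by
    rw [natDegree_comp, natDegree_taylor, natDegree_C_mul_X _ (neg_ne_zero.2 ht.ne'), mul_one]
    exact hp
  have hqM : ∀ x ∈ Icc (0 : ℝ) 1, |q.eval x| ≤ M := fun x ⟨h0, h1⟩ => by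
    have heval : q.eval x = p.eval (t - t * x) := by
      simp [q, taylor_eval]; ring_nf
    exact heval ▸ hM _ ⟨by nlinarith, by nlinarith⟩
  have hk := hC q hq M hqM k
  rwa [comp_C_mul_X_coeff, abs_mul, abs_pow, abs_neg, abs_of_pos ht] at hk

theorem exists_first_exit {X : Type*} [TopologicalSpace X] {f : ℝ → X} (hf : Continuous f)
    {U : Set X} (hU : IsOpen U) (hf0 : f 0 ∈ U) {T : ℝ} (hT : 0 ≤ T) (hfT : f T ∉ U) :
    ∃ t > 0, f t ∈ frontier U ∧ ∀ x ∈ Icc 0 t, f x ∈ closure U := by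
  have hcompact : IsCompact (Icc 0 T ∩ f ⁻¹' Uᶜ) :=
    isCompact_Icc.inter_right (hU.isClosed_compl.preimage hf)
  obtain ⟨t, ⟨⟨ht0, htT⟩, htU⟩, hleast⟩ := hcompact.exists_isLeast ⟨T, ⟨hT, le_rfl⟩, hfT⟩
  have hbefore : MapsTo f (Ico 0 t) U := fun x hx => by
    by_contra hxU
    exact hx.2.not_ge (hleast ⟨⟨hx.1, hx.2.le.trans htT⟩, hxU⟩)
  have hne : 0 ≠ t := by rintro rfl; exact htU hf0
  have hclosure : MapsTo f (Icc 0 t) (closure U) := closure_Ico hne ▸ hbefore.closure hf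
  exact ⟨t, lt_of_le_of_ne ht0 hne, ⟨hclosure ⟨ht0, le_rfl⟩, by rwa [hU.interior_eq]⟩, hclosure⟩

theorem abs_eval_le_of_abs_coeff_le {q : ℝ[X]} {d : ℕ} (hq : q.natDegree ≤ d) {δ : ℝ}
    (hδ : ∀ k, |q.coeff k| ≤ δ) {x T : ℝ} (hT : 1 ≤ T) (hx : |x| ≤ T) :
    |q.eval x| ≤ δ * ((d + 1) * T ^ d) := by
  have hterm (k : ℕ) (hk : k ∈ Finset.range (d + 1)) : |q.coeff k * x ^ k| ≤ δ * T ^ d := by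
    rw [abs_mul, abs_pow]
    have hpow : |x| ^ k ≤ T ^ d := (pow_le_pow_left₀ (abs_nonneg x) hx k).trans
      (pow_le_pow_right₀ hT (Nat.lt_succ_iff.1 (Finset.mem_range.1 hk)))
    exact mul_le_mul (hδ k) hpow (by positivity) ((abs_nonneg _).trans (hδ k))
  rw [eval_eq_sum_range' (Nat.lt_succ_of_le hq)]
  refine (Finset.abs_sum_le_sum_abs _ _).trans ((Finset.sum_le_card_nsmul _ _ _ hterm).trans_eq ?_)
  simp only [Finset.card_range, nsmul_eq_mul, Nat.cast_succ]
  ring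

theorem exists_notMem_Ioo_of_natDegree_ne_zero {p : ℝ[X]} (hp : p.natDegree ≠ 0) (a b : ℝ) :
    ∃ T ≥ 0, p.eval T ∉ Ioo a b := by
  have htend := p.abs_tendsto_atTop (natDegree_pos_iff_degree_pos.1 (Nat.pos_of_ne_zero hp))
  obtain ⟨T, hT, hT0⟩ :=
    ((htend.eventually_gt_atTop (max |a| |b|)).and (eventually_ge_atTop 0)).exists
  exact ⟨T, hT0, fun h => hT.not_ge (abs_le_max_abs_abs h.1.le h.2.le)⟩

theorem exists_pos_forall_eval_mem_Ioo (d : ℕ) {a s₀ b T : ℝ} (ha : a < s₀) (hb : s₀ < b)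
    (hT : 1 ≤ T) : ∃ δ > 0, ∀ p : ℝ[X], p.natDegree ≤ d → (∀ k, |(p - C s₀).coeff k| ≤ δ) →
      ∀ x ∈ Icc 0 T, p.eval x ∈ Ioo a b := by
  obtain ⟨ρ, hρ, hlt⟩ := exists_between (lt_min (sub_pos.2 ha) (sub_pos.2 hb))
  obtain ⟨hρa, hρb⟩ := lt_min_iff.1 hlt
  refine ⟨ρ / ((d + 1) * T ^ d), by positivity, fun p hd hcoeff x hx => ?_⟩
  have hdev := abs_eval_le_of_abs_coeff_le ((natDegree_sub_C (R := ℝ)).trans_le hd) hcoeff hT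
    (abs_le.2 ⟨by linarith [hx.1], hx.2⟩)
  rw [div_mul_cancel₀ _ (by positivity), eval_sub, eval_C, abs_le] at hdev
  exact ⟨by linarith, by linarith⟩

/-- A polynomial close to the constant `s₀` leaves a neighbourhood of `s₀` so slowly that, seen
from the first exit time, it is close to a constant again. -/
theorem exists_taylor_near_const (d : ℕ) {a s₀ b η : ℝ} (ha : a < s₀) (hb : s₀ < b) (hη : 0 < η) :
    ∃ δ > 0, ∀ p : ℝ[X], p.natDegree ≤ d → p.natDegree ≠ 0 → (∀ k, |(p - C s₀).coeff k| ≤ δ) →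
      ∃ t, ∃ σ ∈ ({a, b} : Set ℝ), ∀ k, |(taylor t p - C σ).coeff k| ≤ η := by
  obtain ⟨B, hB⟩ := exists_abs_coeff_taylor_mul_pow_le d
  let M := max |a| |b|
  let T := max 1 (B * M / η)
  have hT : 1 ≤ T := le_max_left _ _
  obtain ⟨δ, hδ, hstay⟩ := exists_pos_forall_eval_mem_Ioo d ha hb hT
  refine ⟨δ, hδ, fun p hd hp0 hcoeff => ?_⟩
  replace hstay := hstay p hd hcoeff
  obtain ⟨T', hT', hleave⟩ := exists_notMem_Ioo_of_natDegree_ne_zero hp0 a b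
  obtain ⟨t, ht, hexit, hbefore⟩ := exists_first_exit p.continuous isOpen_Ioo
    (hstay 0 ⟨le_rfl, by linarith⟩) hT' hleave
  rw [frontier_Ioo (ha.trans hb)] at hexit
  have htT : T < t := by
    by_contra! hle
    obtain ⟨hlt, hgt⟩ := hstay t ⟨ht.le, hle⟩
    obtain h | h := hexit <;> simp_all
  refine ⟨t, _, hexit, fun k => ?_⟩
  obtain rfl | k := k
  · simpa [taylor_coeff_zero] using hη.le
  have hbound := hB p hd M t ht (fun x hx => by
    have := hbefore x hx
    rw [closure_Ioo (ha.trans hb).ne] at this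
    exact abs_le_max_abs_abs this.1 this.2) (k + 1)
  have hlarge : B * M ≤ η * t ^ (k + 1) := by
    calc B * M ≤ η * T := by rw [← div_le_iff₀' hη]; exact le_max_right _ _
      _ ≤ η * t := by gcongr
      _ ≤ η * t ^ (k + 1) := by gcongr; exact le_self_pow₀ (by linarith) (by simp)
  rw [coeff_sub, coeff_C_succ, sub_zero]
  exact le_of_mul_le_mul_right (hbound.trans hlarge) (by positivity)

end PolynomialExit

/-! ### The unipotent flow and its fixed forms -/

section UnipotentFlow

/-- The one-parameter unipotent subgroup preserving the forms `y² - 2xz + s z²`. -/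
noncomputable def unipotent (t : ℝ) : SL(3, ℝ) :=
  ⟨!![1, t, t ^ 2 / 2; 0, 1, t; 0, 0, 1], by simp [det_fin_three]⟩

theorem coe_unipotent (t : ℝ) :
    (unipotent t : Matrix (Fin 3) (Fin 3) ℝ) = !![1, t, t ^ 2 / 2; 0, 1, t; 0, 0, 1] := rfl

theorem unipotent_zero : unipotent 0 = 1 :=
  Subtype.ext <| by ext i j; fin_cases i <;> fin_cases j <;> simp [coe_unipotent]

theorem unipotent_add (s t : ℝ) : unipotent (s + t) = unipotent s * unipotent t := by
  refine Subtype.ext ?_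
  rw [Matrix.SpecialLinearGroup.coe_mul]
  ext i j
  fin_cases i <;> fin_cases j <;> simp [coe_unipotent, mul_apply, Fin.sum_univ_three] <;> ring

theorem continuous_unipotent : Continuous unipotent := by
  refine Continuous.subtype_mk (continuous_matrix fun i j => ?_) _
  fin_cases i <;> fin_cases j <;>
    first | exact continuous_const | exact continuous_id | exact (continuous_pow 2).div_const 2

/-- The action of `unipotent` on the space of lattices. -/
noncomputable def unipotentFlow : Flow ℝ (Lattices (Fin 3)) where
  toFun t x := unipotent t • x
  cont' := by
    have := continuous_unipotent
    unfold Function.uncurry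
    fun_prop
  map_add' s t x := by rw [unipotent_add, mul_smul]
  map_zero' x := by rw [unipotent_zero, one_smul]

/-- The Gram matrix of `y² - 2xz + s z²`. -/
def stdForm (s : ℝ) : Matrix (Fin 3) (Fin 3) ℝ := !![0, 0, -1; 0, 1, 0; -1, 0, s]

theorem isSymm_stdForm (s : ℝ) : (stdForm s).IsSymm := by
  ext i j; fin_cases i <;> fin_cases j <;> rfl

theorem det_stdForm (s : ℝ) : (stdForm s).det = -1 := by
  simp [stdForm, det_fin_three]

theorem quad_stdForm (s : ℝ) (v : Fin 3 → ℝ) :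
    quad (stdForm s) v = v 1 ^ 2 - 2 * v 0 * v 2 + s * v 2 ^ 2 := by
  simp [quad, stdForm, dotProduct, mulVec, Fin.sum_univ_three]; ring

theorem continuous_stdForm : Continuous stdForm :=
  continuous_matrix fun i j => by
    fin_cases i <;> fin_cases j <;> first | exact continuous_const | exact continuous_id

theorem pullback_stdForm_unipotent (s t : ℝ) : pullback (stdForm s) (unipotent t) = stdForm s := by
  ext i j
  fin_cases i <;> fin_cases j <;>
    simp [pullback, stdForm, coe_unipotent, mul_apply, Fin.sum_univ_three]
  all_goals ring

theorem isInvariant_valuesGE_stdForm (s ε : ℝ) :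
    IsInvariant unipotentFlow (valuesGE (stdForm s) ε) := fun t x hx =>
  smul_mem_valuesGE.2 (by rwa [pullback_stdForm_unipotent])

end UnipotentFlow

/-! ### Forms leaving a neighbourhood of a fixed form -/

section FormExit

/-- The polynomial `t ↦ (pullback A (unipotent t)) 2 2`, for a symmetric matrix `A`. -/
noncomputable def flowPoly (A : Matrix (Fin 3) (Fin 3) ℝ) : ℝ[X] :=
  C (A 0 0 / 4) * X ^ 4 + C (A 0 1) * X ^ 3 + C (A 1 1 + A 0 2) * X ^ 2 + C (2 * A 1 2) * X +
    C (A 2 2)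

theorem natDegree_flowPoly_le (A : Matrix (Fin 3) (Fin 3) ℝ) : (flowPoly A).natDegree ≤ 4 := by
  unfold flowPoly; compute_degree

variable {A : Matrix (Fin 3) (Fin 3) ℝ}

theorem eval_flowPoly (hA : A.IsSymm) (t : ℝ) :
    (flowPoly A).eval t = pullback A (unipotent t) 2 2 := by
  simp [flowPoly, pullback, coe_unipotent, mul_apply, Fin.sum_univ_three, hA.apply 0 1,
    hA.apply 0 2, hA.apply 1 2]
  ring

theorem taylor_flowPoly (hA : A.IsSymm) (t : ℝ) :
    taylor t (flowPoly A) = flowPoly (pullback A (unipotent t)) :=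
  Polynomial.funext fun x => by
    rw [taylor_eval, eval_flowPoly hA, eval_flowPoly (isSymm_pullback _ hA), ← pullback_mul,
      ← Matrix.SpecialLinearGroup.coe_mul, ← unipotent_add, add_comm]

/-- With `flowPoly`, this invariant determines a symmetric matrix. -/
theorem pullback_unipotent_one_one_sub (hA : A.IsSymm) (t : ℝ) :
    pullback A (unipotent t) 1 1 - 2 * pullback A (unipotent t) 0 2 = A 1 1 - 2 * A 0 2 := by
  simp [pullback, coe_unipotent, mul_apply, Fin.sum_univ_three, hA.apply 0 1]
  ring

theorem abs_sub_stdForm_le (hA : A.IsSymm) {σ η : ℝ}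
    (hpoly : ∀ k, |(flowPoly A - C σ).coeff k| ≤ η) (hinv : |A 1 1 - 2 * A 0 2 - 3| ≤ η)
    (i j : Fin 3) : |A i j - stdForm σ i j| ≤ 4 * η := by
  have h0 := abs_le.1 (hpoly 0)
  have h1 := abs_le.1 (hpoly 1)
  have h2 := abs_le.1 (hpoly 2)
  have h3 := abs_le.1 (hpoly 3)
  have h4 := abs_le.1 (hpoly 4)
  have hinv := abs_le.1 hinv
  simp [flowPoly, coeff_X, coeff_C, -map_add] at h0 h1 h2 h3 h4
  have := hA.apply 0 1
  have := hA.apply 0 2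
  have := hA.apply 1 2
  rw [abs_le]
  fin_cases i <;> fin_cases j <;> simp [stdForm] <;> constructor <;> linarith

theorem eventually_abs_coeff_flowPoly_sub_le (s : ℝ) {δ : ℝ} (hδ : 0 < δ) :
    ∀ᶠ A in 𝓝 (stdForm s), ∀ k, |(flowPoly A - C s).coeff k| ≤ δ := by
  have hconst : flowPoly (stdForm s) = C s := by simp [flowPoly, stdForm]
  have hcont (k : ℕ) : Continuous fun A => |(flowPoly A - C s).coeff k| := by
    simp only [flowPoly, coeff_sub, coeff_add, coeff_C_mul, coeff_C]
    split_ifs <;> fun_prop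
  have hsmall : ∀ᶠ A in 𝓝 (stdForm s), ∀ k ∈ Finset.range 5, |(flowPoly A - C s).coeff k| ≤ δ :=
    (Finset.eventually_all _).2 fun k _ =>
      (hcont k).continuousAt.eventually_le_const (by simpa [hconst] using hδ)
  filter_upwards [hsmall] with A hA k
  obtain hk | hk := lt_or_ge k 5
  · exact hA k (Finset.mem_range.2 hk)
  · have hdeg : (flowPoly A - C s).natDegree < k := by
      rw [natDegree_sub_C]
      exact (natDegree_flowPoly_le A).trans_lt hk
    simpa [coeff_eq_zero_of_natDegree_lt hdeg] using hδ.le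

theorem eq_stdForm_of_natDegree_flowPoly_eq_zero (hA : A.IsSymm) (hdet : A.det = -1)
    (hdeg : (flowPoly A).natDegree = 0) : A = stdForm (A 2 2) := by
  have hcoeff (k : ℕ) (hk : 0 < k) : (flowPoly A).coeff k = 0 :=
    coeff_eq_zero_of_natDegree_lt (hdeg ▸ hk)
  have h00 : A 0 0 = 0 := by simpa [flowPoly, coeff_C, -map_add] using hcoeff 4 (by simp)
  have h01 : A 0 1 = 0 := by simpa [flowPoly, coeff_C, -map_add] using hcoeff 3 (by simp)
  have h12 : A 1 2 = 0 := by simpa [flowPoly, coeff_C, -map_add] using hcoeff 1 (by simp)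
  have h02 : A 0 2 = -A 1 1 := by
    have h2 : A 1 1 + A 0 2 = 0 := by simpa [flowPoly, coeff_C, -map_add] using hcoeff 2 (by simp)
    linarith
  have h11 : A 1 1 = 1 := by
    rw [det_fin_three, hA.apply 0 1, hA.apply 0 2, hA.apply 1 2, h00, h01, h12, h02] at hdet
    have hcube : (A 1 1 - 1) * (A 1 1 ^ 2 + A 1 1 + 1) = 0 := by linear_combination -hdet
    obtain h | h := mul_eq_zero.1 hcube
    · linarith
    · nlinarith [sq_nonneg (A 1 1 + 1)]
  ext i j
  fin_cases i <;> fin_cases j <;>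
    simp [stdForm, hA.apply 0 1, hA.apply 0 2, hA.apply 1 2, h00, h01, h12, h02, h11]

theorem exists_pos_forall_abs_sub_le_imp_mem {m n : Type*} [Finite m] [Finite n]
    {B : Matrix m n ℝ} {N : Set (Matrix m n ℝ)} (hN : N ∈ 𝓝 B) :
    ∃ η > 0, ∀ A : Matrix m n ℝ, (∀ i j, |A i j - B i j| ≤ η) → A ∈ N := by
  cases nonempty_fintype m
  cases nonempty_fintype n
  obtain ⟨η, hη, hsub⟩ := (Metric.nhds_basis_closedBall (α := m → n → ℝ)).mem_iff.1 hN
  refine ⟨η, hη, fun A hA => hsub ?_⟩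
  exact (dist_pi_le_iff hη.le).2 fun i => (dist_pi_le_iff hη.le).2 fun j => hA i j

theorem eventually_eq_stdForm_or_exists_pullback_mem {a s₀ b : ℝ} (ha : a < s₀) (hb : s₀ < b)
    {N : Set (Matrix (Fin 3) (Fin 3) ℝ)} (hNa : N ∈ 𝓝 (stdForm a)) (hNb : N ∈ 𝓝 (stdForm b)) :
    ∀ᶠ A in 𝓝 (stdForm s₀), A.IsSymm → A.det = -1 →
      (∃ s, A = stdForm s) ∨ ∃ t, pullback A (unipotent t) ∈ N := by
  obtain ⟨ηa, hηa, hsuba⟩ := exists_pos_forall_abs_sub_le_imp_mem hNa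
  obtain ⟨ηb, hηb, hsubb⟩ := exists_pos_forall_abs_sub_le_imp_mem hNb
  have hη : 0 < min ηa ηb / 4 := by positivity
  obtain ⟨δ, hδ, hexit⟩ := exists_taylor_near_const 4 ha hb hη
  have hinv : ∀ᶠ A in 𝓝 (stdForm s₀), |A 1 1 - 2 * A 0 2 - 3| ≤ min ηa ηb / 4 := by
    have hcont : Continuous fun A : Matrix (Fin 3) (Fin 3) ℝ => |A 1 1 - 2 * A 0 2 - 3| := by
      fun_prop
    have hzero : stdForm s₀ 1 1 - 2 * stdForm s₀ 0 2 - 3 = 0 := by simp [stdForm]; norm_num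
    exact hcont.continuousAt.eventually_le_const (by simpa only [hzero, abs_zero] using hη)
  filter_upwards [hinv, eventually_abs_coeff_flowPoly_sub_le s₀ hδ] with A hAinv hAcoeff hA hdet
  by_cases hdeg : (flowPoly A).natDegree = 0
  · exact .inl ⟨_, eq_stdForm_of_natDegree_flowPoly_eq_zero hA hdet hdeg⟩
  obtain ⟨t, σ, hσ, hnear⟩ := hexit _ (natDegree_flowPoly_le A) hdeg hAcoeff
  rw [taylor_flowPoly hA] at hnear
  have hclose := abs_sub_stdForm_le (isSymm_pullback _ hA) hnear
    (by rwa [pullback_unipotent_one_one_sub hA])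
  refine .inr ⟨t, ?_⟩
  obtain rfl | rfl := hσ
  · exact hsuba _ fun i j => (hclose i j).trans (by linarith [min_le_left ηa ηb])
  · exact hsubb _ fun i j => (hclose i j).trans (by linarith [min_le_right ηa ηb])

end FormExit

/-! ### Forms bounded below on a minimal set -/

section MinimalSetForms

/-- The forms that take absolute values at least `ε` on the nonzero vectors of some lattice
in `Y`. -/
def formsGE {ι : Type*} [Fintype ι] [DecidableEq ι] (Y : Set (Lattices ι)) (ε : ℝ) :
    Set (Matrix ι ι ℝ) :=
  {A | ∃ z ∈ Y, z ∈ valuesGE A ε}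

theorem isClosed_formsGE {ι : Type*} [Fintype ι] [DecidableEq ι] {Y : Set (Lattices ι)}
    (hY : IsCompact Y) (ε : ℝ) : IsClosed (formsGE Y ε) := by
  have : CompactSpace Y := isCompact_iff_compactSpace.1 hY
  have hclosed : IsClosed {p : Matrix ι ι ℝ × Y | (p.2 : Lattices ι) ∈ valuesGE p.1 ε} :=
    (isClosed_setOf_mem_valuesGE ε).preimage
      (continuous_fst.prodMk (continuous_subtype_val.comp continuous_snd))
  convert isClosedMap_fst_of_compactSpace _ hclosed
  ext A
  simp [formsGE]

variable {Y : Set (Lattices (Fin 3))} {ε s : ℝ}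

theorem pullback_unipotent_mem_formsGE (hY : IsInvariant unipotentFlow Y)
    {A : Matrix (Fin 3) (Fin 3) ℝ} (hA : A ∈ formsGE Y ε) (t : ℝ) :
    pullback A (unipotent t) ∈ formsGE Y ε := by
  obtain ⟨z, hz, hzA⟩ := hA
  refine ⟨unipotent (-t) • z, hY (-t) hz, smul_mem_valuesGE.1 ?_⟩
  rwa [smul_smul, ← unipotent_add, add_neg_cancel, unipotent_zero, one_smul]

theorem subset_valuesGE_of_stdForm_mem_formsGE (hY : IsMinimalSet unipotentFlow Y)
    (hs : stdForm s ∈ formsGE Y ε) : Y ⊆ valuesGE (stdForm s) ε :=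
  hY.subset_of_inter_nonempty (isClosed_valuesGE _ _) (isInvariant_valuesGE_stdForm s ε) hs

theorem exists_intCast_mem_of_isOpen_of_cone {ι : Type*} [Finite ι] {C : Set (ι → ℝ)}
    (hopen : IsOpen C) (hne : C.Nonempty) (hcone : ∀ c : ℝ, 0 < c → ∀ v ∈ C, c • v ∈ C) :
    ∃ m : ι → ℤ, (fun i => (m i : ℝ)) ∈ C := by
  have hdense : DenseRange (Pi.map fun (_ : ι) (q : ℚ) => (q : ℝ)) :=
    DenseRange.piMap fun _ => Rat.denseRange_cast
  obtain ⟨q, hq⟩ := hdense.exists_mem_open hopen hne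
  obtain ⟨b, hb⟩ := IsLocalization.exist_integer_multiples_of_finite (nonZeroDivisors ℤ) q
  choose k hk using hb
  have hb0 : ((b : ℤ) : ℝ) ≠ 0 := by exact_mod_cast nonZeroDivisors.coe_ne_zero b
  refine ⟨fun i => b * k i, ?_⟩
  convert hcone _ (pow_pos (abs_pos.2 hb0) 2) _ hq using 1
  ext i
  have hki : ((k i : ℤ) : ℝ) = b * q i := by
    have := hk i
    rw [zsmul_eq_mul] at this
    exact_mod_cast this
  simp [hki, Pi.map, sq, mul_assoc]

theorem exists_mulVec_intCast_mem_of_isOpen_of_cone {ι : Type*} [Fintype ι] [DecidableEq ι]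
    (g : SpecialLinearGroup ι ℝ) {C : Set (ι → ℝ)} (hopen : IsOpen C) (hne : C.Nonempty)
    (hcone : ∀ c : ℝ, 0 < c → ∀ v ∈ C, c • v ∈ C) :
    ∃ m : ι → ℤ, (g : Matrix ι ι ℝ) *ᵥ (Int.cast ∘ m) ∈ C := by
  obtain ⟨v, hv⟩ := hne
  refine exists_intCast_mem_of_isOpen_of_cone (C := ((g : Matrix ι ι ℝ) *ᵥ ·) ⁻¹' C)
    (hopen.preimage (by fun_prop)) ⟨(g⁻¹ : SpecialLinearGroup ι ℝ) *ᵥ v, ?_⟩ fun c hc v hv => ?_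
  · rwa [mem_preimage, mulVec_mulVec, ← Matrix.SpecialLinearGroup.coe_mul, mul_inv_cancel,
      Matrix.SpecialLinearGroup.coe_one, one_mulVec]
  · rw [mem_preimage, mulVec_smul]
    exact hcone c hc _ hv

/-- Applied with `τ = ±1`, this finds isotropic forms on either side of `stdForm s`. -/
theorem exists_isotropic_stdForm (g : SL(3, ℝ)) (s : ℝ) {τ : ℝ} (hτ : τ ≠ 0) :
    ∃ σ, 0 < τ * (σ - s) ∧
      ∃ m : Fin 3 → ℤ, m ≠ 0 ∧ quad (pullback (stdForm σ) g) (Int.cast ∘ m) = 0 := by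
  let C : Set (Fin 3 → ℝ) := {v | τ * quad (stdForm s) v < 0} ∩ {v | v 2 ≠ 0}
  have hopen : IsOpen C := by
    refine (isOpen_lt ?_ continuous_const).inter (isOpen_ne_fun ?_ continuous_const)
    · simp only [quad_stdForm]; fun_prop
    · fun_prop
  have hne : C.Nonempty :=
    ⟨![(s + τ) / 2, 0, 1], by simpa [quad_stdForm, mul_div_cancel₀] using mul_self_pos.2 hτ,
      by simp⟩
  have hcone (c : ℝ) (hc : 0 < c) (v : Fin 3 → ℝ) (hv : v ∈ C) : c • v ∈ C := by
    refine ⟨?_, mul_ne_zero hc.ne' hv.2⟩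
    rw [mem_ofPred_eq, quad_smul, mul_left_comm]
    exact mul_neg_of_pos_of_neg (by positivity) hv.1
  obtain ⟨m, hneg, hm2⟩ := exists_mulVec_intCast_mem_of_isOpen_of_cone g hopen hne hcone
  set v := (g : Matrix (Fin 3) (Fin 3) ℝ) *ᵥ (Int.cast ∘ m) with hv
  have hv2 : v 2 ≠ 0 := hm2
  refine ⟨s - quad (stdForm s) v / v 2 ^ 2, ?_, m, ?_, ?_⟩
  · rw [sub_sub_cancel_left, mul_neg, ← mul_div_assoc, Left.neg_pos_iff]
    exact div_neg_of_neg_of_pos hneg (sq_pos_of_ne_zero hv2)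
  · rintro rfl
    exact hm2 (by simp [hv, Function.comp_def, ← Pi.zero_def])
  · rw [← quad_mulVec, ← hv]
    simp only [quad_stdForm]
    field

theorem exists_stdForm_notMem_formsGE (hY : IsMinimalSet unipotentFlow Y) (hε : 0 < ε) (s : ℝ)
    {τ : ℝ} (hτ : τ ≠ 0) : ∃ σ, 0 < τ * (σ - s) ∧ stdForm σ ∉ formsGE Y ε := by
  obtain ⟨y, hy⟩ := hY.prop.2.1
  obtain ⟨g, rfl⟩ := QuotientGroup.mk_surjective y
  obtain ⟨σ, hσ, m, hm, hzero⟩ := exists_isotropic_stdForm g s hτ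
  refine ⟨σ, hσ, fun hmem => hε.not_ge ?_⟩
  simpa [hzero] using mk_mem_valuesGE.1 (subset_valuesGE_of_stdForm_mem_formsGE hY hmem hy) m hm

theorem IsMinimalSet.eventually_eq_stdForm_of_mem_formsGE (hY : IsMinimalSet unipotentFlow Y)
    (hc : IsCompact Y) (hε : 0 < ε) (s₀ : ℝ) :
    ∀ᶠ A in 𝓝 (stdForm s₀), A.IsSymm → A.det = -1 → A ∈ formsGE Y ε → ∃ s, A = stdForm s := by
  obtain ⟨a, ha, haY⟩ := exists_stdForm_notMem_formsGE hY hε s₀ (neg_ne_zero.2 one_ne_zero)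
  obtain ⟨b, hb, hbY⟩ := exists_stdForm_notMem_formsGE hY hε s₀ one_ne_zero
  have hopen : IsOpen (formsGE Y ε)ᶜ := (isClosed_formsGE hc ε).isOpen_compl
  filter_upwards [eventually_eq_stdForm_or_exists_pullback_mem (by linarith) (by linarith)
    (hopen.mem_nhds haY) (hopen.mem_nhds hbY)] with A hexit hA hdet hmem
  refine (hexit hA hdet).resolve_right ?_
  rintro ⟨t, ht⟩
  exact ht (pullback_unipotent_mem_formsGE hY.prop.2.2 hmem t)

end MinimalSetForms

/-! ### Unipotent elements of the stabilizer of a lattice -/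

section Isotropic

theorem triangular_of_pullback_stdForm_eq {g : Matrix (Fin 3) (Fin 3) ℝ} {s s' : ℝ}
    (h20 : g 2 0 = 0) (h21 : g 2 1 = 0) (hg : pullback (stdForm s) g = stdForm s') :
    g 1 0 = 0 ∧ g 1 1 ^ 2 = 1 ∧ g 0 0 * g 2 2 = 1 ∧ g 1 1 * g 1 2 = g 0 1 * g 2 2 := by
  have hentry (i j : Fin 3) : pullback (stdForm s) g i j = stdForm s' i j := by rw [hg]
  simp only [pullback, mul_apply, transpose_apply, Fin.sum_univ_three] at hentry
  have h10 : g 1 0 = 0 := by simpa [stdForm, h20] using hentry 0 0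
  have h02 : g 0 0 * g 2 2 = 1 := by simpa [stdForm, h20, h10] using hentry 0 2
  have h11 : g 1 1 * g 1 1 = 1 := by simpa [stdForm, h21] using hentry 1 1
  have h12 : g 1 1 * g 1 2 - g 0 1 * g 2 2 = 0 := by
    simpa [stdForm, h21, ← sub_eq_add_neg] using hentry 1 2
  exact ⟨h10, by rw [sq, h11], h02, by linarith⟩

theorem trace_unipotent_mul {g : Matrix (Fin 3) (Fin 3) ℝ} (t : ℝ) (h10 : g 1 0 = 0)
    (h20 : g 2 0 = 0) (h21 : g 2 1 = 0) :
    ((unipotent t : Matrix (Fin 3) (Fin 3) ℝ) * g).trace = g.trace := by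
  simp only [trace_fin_three, mul_apply, Fin.sum_univ_three, h10, h20, h21]
  simp [coe_unipotent]

theorem sq_unipotent_mul_sub_one {g : Matrix (Fin 3) (Fin 3) ℝ} {s s' : ℝ} (t : ℝ)
    (h20 : g 2 0 = 0) (h21 : g 2 1 = 0) (hg : pullback (stdForm s) g = stdForm s')
    (h11 : 0 < g 1 1) (htrace : g.trace = 3) :
    ((unipotent t : Matrix (Fin 3) (Fin 3) ℝ) * g - 1) ^ 2 =
      Matrix.single 0 2 ((t + g 0 1) ^ 2) := by
  obtain ⟨h10, hsq, hprod, h12⟩ := triangular_of_pullback_stdForm_eq h20 h21 hg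
  have h11' : g 1 1 = 1 := by nlinarith
  rw [trace_fin_three, h11'] at htrace
  have h00 : g 0 0 = 1 := by
    have hsq0 : (g 0 0 - 1) ^ 2 = 0 := by linear_combination g 0 0 * htrace - hprod
    linarith [pow_eq_zero_iff two_ne_zero |>.1 hsq0]
  have h22 : g 2 2 = 1 := by linarith
  rw [h11', h22, one_mul, mul_one] at h12
  ext i j
  fin_cases i <;> fin_cases j <;>
    simp only [sq, Matrix.sub_apply, mul_apply, Fin.sum_univ_three] <;>
    simp [coe_unipotent, one_apply, h10, h20, h21, h11', h00, h22, h12]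
  ring

theorem exists_isotropic_of_sq_conj_sub_one_eq_single {y : SL(3, ℝ)} {γ : SL(3, ℤ)} {c : ℝ}
    (hc : c ≠ 0)
    (hsq : ((y * (γ : SL(3, ℝ)) * y⁻¹ : SL(3, ℝ)) - 1 : Matrix (Fin 3) (Fin 3) ℝ) ^ 2 =
      Matrix.single 0 2 c) (s : ℝ) :
    ∃ m : Fin 3 → ℤ, m ≠ 0 ∧ quad (pullback (stdForm s) y) (Int.cast ∘ m) = 0 := by
  have hsemi : SemiconjBy (y : Matrix (Fin 3) (Fin 3) ℝ) (γ : SL(3, ℝ))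
      (y * (γ : SL(3, ℝ)) * y⁻¹ : SL(3, ℝ)) := by
    rw [SemiconjBy, ← Matrix.SpecialLinearGroup.coe_mul, ← Matrix.SpecialLinearGroup.coe_mul,
      inv_mul_cancel_right]
  have hcast : (((γ : Matrix (Fin 3) (Fin 3) ℤ) - 1) ^ 2)ᴿ =
      ((γ : SL(3, ℝ)) - 1 : Matrix (Fin 3) (Fin 3) ℝ) ^ 2 := by
    have hmap := map_pow (Int.castRingHom ℝ).mapMatrix ((γ : Matrix (Fin 3) (Fin 3) ℤ) - 1) 2
    rwa [map_sub, map_one] at hmap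
  have hconj := ((hsemi.sub_right (SemiconjBy.one_right _)).pow_right 2).eq
  rw [hsq, ← hcast] at hconj
  obtain ⟨j, hj⟩ : ∃ j, y 2 j ≠ 0 := by
    by_contra! hrow
    exact one_ne_zero (y.det_coe.symm.trans (det_eq_zero_of_row_eq_zero 2 hrow))
  set m : Fin 3 → ℤ := ((γ : Matrix (Fin 3) (Fin 3) ℤ) - 1) ^ 2 *ᵥ Pi.single j 1 with hm
  have hym : (y : Matrix (Fin 3) (Fin 3) ℝ) *ᵥ (Int.cast ∘ m) = Pi.single 0 (c * y 2 j) := by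
    rw [hm, intCast_comp_mulVec, mulVec_mulVec, hconj, intCast_comp_single, mulVec_single_one]
    ext i
    fin_cases i <;> simp
  refine ⟨m, ?_, by rw [← quad_mulVec, hym, quad_stdForm]; simp⟩
  intro h0
  simpa [h0, hc, hj, ← Pi.zero_def, Function.comp_def] using congrFun hym 0

theorem exists_isotropic_of_return {g y : SL(3, ℝ)} {γ : SL(3, ℤ)} {s s' t : ℝ}
    (hret : g * y = unipotent t * y * (γ : SL(3, ℝ))) (h20 : g 2 0 = 0) (h21 : g 2 1 = 0)
    (hg : pullback (stdForm s) g = stdForm s') (hdiag : ∀ i, |g i i - 1| < 1 / 3) (h01 : g 0 1 ≠ t)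
    (σ : ℝ) :
    ∃ m : Fin 3 → ℤ, m ≠ 0 ∧ quad (pullback (stdForm σ) y) (Int.cast ∘ m) = 0 := by
  obtain ⟨h10, -⟩ := triangular_of_pullback_stdForm_eq h20 h21 hg
  have hconj : y * (γ : SL(3, ℝ)) * y⁻¹ = unipotent (-t) * g := by
    have hinv : unipotent (-t) * unipotent t = 1 := by
      rw [← unipotent_add, neg_add_cancel, unipotent_zero]
    rw [mul_inv_eq_iff_eq_mul, mul_assoc _ g, hret, ← mul_assoc, ← mul_assoc, hinv, one_mul]
  have htrace : (g : Matrix (Fin 3) (Fin 3) ℝ).trace = (γ : Matrix (Fin 3) (Fin 3) ℤ).trace := by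
    rw [← trace_unipotent_mul (-t) h10 h20 h21, ← Matrix.SpecialLinearGroup.coe_mul, ← hconj,
      Matrix.SpecialLinearGroup.coe_mul, trace_mul_comm, ← Matrix.SpecialLinearGroup.coe_mul,
      inv_mul_cancel_left]
    simp [trace_fin_three]
  have htrace3 : (g : Matrix (Fin 3) (Fin 3) ℝ).trace = 3 := by
    have h0 := abs_lt.1 (hdiag 0)
    have h1 := abs_lt.1 (hdiag 1)
    have h2 := abs_lt.1 (hdiag 2)
    have hgt : 2 < (g : Matrix (Fin 3) (Fin 3) ℝ).trace := by rw [trace_fin_three]; linarith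
    have hlt : (g : Matrix (Fin 3) (Fin 3) ℝ).trace < 4 := by rw [trace_fin_three]; linarith
    rw [htrace] at hgt hlt ⊢
    norm_cast at hgt hlt ⊢
    omega
  refine exists_isotropic_of_sq_conj_sub_one_eq_single (c := (-t + g 0 1) ^ 2)
    (γ := γ) (pow_ne_zero 2 fun h => h01 (by linarith)) ?_ σ
  rw [hconj, Matrix.SpecialLinearGroup.coe_mul]
  exact sq_unipotent_mul_sub_one (-t) h20 h21 hg (by linarith [abs_lt.1 (hdiag 1)]) htrace3

end Isotropic

/-! ### Returns of a minimal set -/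

section Returns

/-- The integral automorphs of unit determinant of the form `B`. -/
def automorphs {ι : Type*} [Fintype ι] [DecidableEq ι] (B : Matrix ι ι ℝ) :
    Set (SpecialLinearGroup ι ℤ) :=
  {γ | pullback B (γ : SpecialLinearGroup ι ℝ) = B}

variable {Y : Set (Lattices (Fin 3))} {ε s s₀ s₁ : ℝ} {y : SL(3, ℝ)}

theorem mem_automorphs_of_mul_eq {g : SL(3, ℝ)} {t : ℝ} {γ : SL(3, ℤ)}
    (hret : g * y = unipotent t * y * (γ : SL(3, ℝ)))
    (hg : pullback (stdForm s) g = stdForm s) : γ ∈ automorphs (pullback (stdForm s) y) := by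
  have hmul := congrArg (fun h : SL(3, ℝ) => pullback (stdForm s) h) hret
  simp only [Matrix.SpecialLinearGroup.coe_mul, pullback_mul, hg, pullback_stdForm_unipotent]
    at hmul
  exact hmul.symm

theorem exists_eventually_return_time_lt (hfin : (automorphs (pullback (stdForm s) y)).Finite) :
    ∃ T, ∀ᶠ g : SL(3, ℝ) in 𝓝 1, pullback (stdForm s) g = stdForm s →
      ∀ (t : ℝ) (γ : SL(3, ℤ)), g * y = unipotent t * y * (γ : SL(3, ℝ)) → t < T := by
  let f (γ : SL(3, ℤ)) (g : SL(3, ℝ)) : ℝ := (g * y * (γ : SL(3, ℝ))⁻¹ * y⁻¹) 0 1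
  have hf (γ : SL(3, ℤ)) : Continuous (f γ) := by
    have hmul : Continuous fun g : SL(3, ℝ) => g * y * (γ : SL(3, ℝ))⁻¹ * y⁻¹ := by fun_prop
    exact (continuous_subtype_val.comp hmul).matrix_elem 0 1
  obtain ⟨T, hT⟩ := (hfin.image (f · 1)).bddAbove
  refine ⟨T + 1, ?_⟩
  have hnear : ∀ᶠ g in 𝓝 1, ∀ γ ∈ automorphs (pullback (stdForm s) y), f γ g < T + 1 :=
    (eventually_all_finite hfin).2 fun γ hγ => (hf γ).continuousAt.eventually_lt_const
      ((hT (mem_image_of_mem _ hγ)).trans_lt (lt_add_one T))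
  filter_upwards [hnear] with g hg hform t γ hret
  have hlt := hg γ (mem_automorphs_of_mul_eq hret hform)
  simp only [f, hret, mul_inv_cancel_right] at hlt
  simpa [coe_unipotent] using hlt

theorem exists_smul_mem_of_mem_closure {G : Type*} [Group G] [TopologicalSpace G]
    [IsTopologicalGroup G] {Γ : Subgroup G} {S : Set (G ⧸ Γ)} {x : G ⧸ Γ} (hx : x ∈ closure S)
    {U : Set G} (hU : U ∈ 𝓝 1) : ∃ g ∈ U, g • x ∈ S := by
  obtain ⟨h, rfl⟩ := QuotientGroup.mk_surjective x
  have hnhds : (fun g : G => (↑(g * h) : G ⧸ Γ)) '' U ∈ 𝓝 (h : G ⧸ Γ) := by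
    have hopen : IsOpenMap fun g : G => (↑(g * h) : G ⧸ Γ) :=
      QuotientGroup.isOpenMap_coe.comp (isOpenMap_mul_right h)
    simpa using hopen.image_mem_nhds hU
  obtain ⟨_, ⟨g, hg, rfl⟩, hgS⟩ := mem_closure_iff_nhds.1 hx _ hnhds
  exact ⟨g, hg, hgS⟩

theorem IsMinimalSet.exists_return (hY : IsMinimalSet unipotentFlow Y) (hc : IsCompact Y)
    (hy : (y : Lattices (Fin 3)) ∈ Y) (T : ℝ) {U : Set SL(3, ℝ)} (hU : U ∈ 𝓝 1) :
    ∃ g ∈ U, ∃ t ≥ T, ∃ γ : SL(3, ℤ), g * y = unipotent t * y * (γ : SL(3, ℝ)) := by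
  have hcluster : MapClusterPt (y : Lattices (Fin 3)) atTop fun t => unipotentFlow t y :=
    hY.mapClusterPt (fun t => tendsto_atTop_add_const_left _ t tendsto_id) hc hy
  have hclosure : (y : Lattices (Fin 3)) ∈ closure ((fun t => unipotentFlow t y) '' Ici T) :=
    mem_closure_iff_clusterPt.2 <|
      ClusterPt.mono hcluster (le_principal_iff.2 (image_mem_map (Ici_mem_atTop T)))
  obtain ⟨g, hg, t, ht, hret⟩ := exists_smul_mem_of_mem_closure hclosure hU
  obtain ⟨γ, hγ⟩ := smul_mk_eq_smul_mk_iff.1 hret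
  exact ⟨g, hg, t, ht, γ, hγ⟩

theorem smul_mem_of_return (hY : IsInvariant unipotentFlow Y) (hy : (y : Lattices (Fin 3)) ∈ Y)
    {g : SL(3, ℝ)} {t : ℝ} {γ : SL(3, ℤ)} (hret : g * y = unipotent t * y * (γ : SL(3, ℝ))) :
    g • (y : Lattices (Fin 3)) ∈ Y := by
  rw [← smul_mk_eq_smul_mk_iff.2 ⟨γ, hret⟩]
  exact hY t hy

theorem IsMinimalSet.eventually_exists_pullback_eq_stdForm (hY : IsMinimalSet unipotentFlow Y)
    (hc : IsCompact Y) (hε : 0 < ε) {h : SL(3, ℝ)} (hh : pullback (stdForm s₀) h = stdForm s₁) :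
    ∀ᶠ p : ℝ × SL(3, ℝ) in 𝓝 (s₀, h), (∃ x ∈ Y, p.2 • x ∈ valuesGE (stdForm p.1) ε) →
      ∃ s, pullback (stdForm p.1) p.2 = stdForm s := by
  have hcont : Continuous fun p : ℝ × SL(3, ℝ) => pullback (stdForm p.1) p.2 := by
    have hpull : Continuous fun q : Matrix (Fin 3) (Fin 3) ℝ × Matrix (Fin 3) (Fin 3) ℝ =>
        pullback q.1 q.2 := by unfold pullback; fun_prop
    exact hpull.comp (continuous_stdForm.prodMap continuous_subtype_val)
  have hev := hY.eventually_eq_stdForm_of_mem_formsGE hc hε s₁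
  rw [← hh] at hev
  filter_upwards [(hcont.tendsto (s₀, h)).eventually hev] with p hp ⟨x, hx, hpx⟩
  exact hp (isSymm_pullback _ (isSymm_stdForm _)) (by simp [det_pullback, det_stdForm])
    ⟨x, hx, smul_mem_valuesGE.1 hpx⟩

theorem IsMinimalSet.eventually_nhds_one_exists_pullback_eq_stdForm
    (hY : IsMinimalSet unipotentFlow Y) (hc : IsCompact Y) (hε : 0 < ε) (s₀ : ℝ) :
    ∀ᶠ g : SL(3, ℝ) in 𝓝 1, (∃ x ∈ Y, g • x ∈ valuesGE (stdForm s₀) ε) →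
      ∃ s, pullback (stdForm s₀) g = stdForm s := by
  have hone : pullback (stdForm s₀) (1 : SL(3, ℝ)) = stdForm s₀ := by
    rw [← unipotent_zero, pullback_stdForm_unipotent]
  exact (Continuous.prodMk_right s₀).continuousAt.eventually
    (hY.eventually_exists_pullback_eq_stdForm hc hε hone)

theorem IsMinimalSet.exists_return_ne (hY : IsMinimalSet unipotentFlow Y) (hc : IsCompact Y)
    (hε : 0 < ε) (hYs : Y ⊆ valuesGE (stdForm s₀) ε) (hy : (y : Lattices (Fin 3)) ∈ Y)
    (hfin : (automorphs (pullback (stdForm s₀) y)).Finite) (T : ℝ) {U : Set SL(3, ℝ)}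
    (hU : U ∈ 𝓝 1) :
    ∃ g ∈ U, ∃ t ≥ T, ∃ γ : SL(3, ℤ), g * y = unipotent t * y * (γ : SL(3, ℝ)) ∧
      ∃ s ≠ s₀, pullback (stdForm s₀) g = stdForm s := by
  obtain ⟨T', hT'⟩ := exists_eventually_return_time_lt hfin
  obtain ⟨g, ⟨⟨hgU, hlt⟩, hg⟩, t, ht, γ, hret⟩ :=
    hY.exists_return hc hy (max T T') (inter_mem (inter_mem hU hT')
      (hY.eventually_nhds_one_exists_pullback_eq_stdForm hc hε s₀))
  obtain ⟨s, hs⟩ := hg ⟨y, hy, hYs (smul_mem_of_return hY.prop.2.2 hy hret)⟩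
  refine ⟨g, hgU, t, (le_max_left _ _).trans ht, γ, hret, s, ?_, hs⟩
  rintro rfl
  exact (hlt hs t γ hret).not_ge ((le_max_right _ _).trans ht)

theorem IsMinimalSet.frequently_subset_valuesGE_stdForm (hY : IsMinimalSet unipotentFlow Y)
    (hc : IsCompact Y) (hε : 0 < ε) (hYs : Y ⊆ valuesGE (stdForm s₀) ε)
    (hy : (y : Lattices (Fin 3)) ∈ Y) (hfin : (automorphs (pullback (stdForm s₀) y)).Finite) :
    ∃ᶠ s in 𝓝[≠] s₀, Y ⊆ valuesGE (stdForm s) ε := by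
  rw [frequently_nhdsWithin_iff, frequently_iff]
  intro W hW
  have hU : ∀ᶠ g : SL(3, ℝ) in 𝓝 1, pullback (stdForm s₀) g 2 2 ∈ W := by
    have hcont : Continuous fun g : SL(3, ℝ) => pullback (stdForm s₀) g 2 2 := by
      unfold pullback
      fun_prop
    exact hcont.continuousAt.eventually (by simpa [pullback, stdForm] using hW)
  obtain ⟨g, hgW, t, -, γ, hret, s, hs, hg⟩ := hY.exists_return_ne hc hε hYs hy hfin 0 hU
  have hsW : stdForm s 2 2 ∈ W := hg ▸ hgW
  refine ⟨s, hsW, subset_valuesGE_of_stdForm_mem_formsGE hY ?_, hs⟩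
  exact ⟨y, hy, hg ▸ smul_mem_valuesGE.1 (hYs (smul_mem_of_return hY.prop.2.2 hy hret))⟩

theorem pullback_stdForm_sub (s s' : ℝ) (g : Matrix (Fin 3) (Fin 3) ℝ) (i : Fin 3) :
    pullback (stdForm s) g i i - pullback (stdForm s') g i i = (s - s') * g 2 i ^ 2 := by
  simp [pullback, stdForm, mul_apply, Fin.sum_univ_three]
  ring

theorem IsMinimalSet.triangular_of_pullback_stdForm_eq (hY : IsMinimalSet unipotentFlow Y)
    (hc : IsCompact Y) (hε : 0 < ε) (hfreq : ∃ᶠ s in 𝓝[≠] s₀, Y ⊆ valuesGE (stdForm s) ε)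
    {g : SL(3, ℝ)} (hret : ∃ x ∈ Y, g • x ∈ Y) (hg : pullback (stdForm s₀) g = stdForm s₁) :
    g 2 0 = 0 ∧ g 2 1 = 0 := by
  have hev := hY.eventually_exists_pullback_eq_stdForm hc hε hg
  have hev' : ∀ᶠ s in 𝓝 s₀, Y ⊆ valuesGE (stdForm s) ε →
      ∃ s', pullback (stdForm s) g = stdForm s' := by
    filter_upwards [(Continuous.prodMk_left g).continuousAt.eventually hev] with s hs hYs
    exact hs (hret.imp fun x hx => ⟨hx.1, hYs hx.2⟩)
  obtain ⟨s, ⟨hYs, hs⟩, hne⟩ :=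
    ((hfreq.and_eventually (hev'.filter_mono nhdsWithin_le_nhds)).and_eventually
      self_mem_nhdsWithin).exists
  obtain ⟨s', hs'⟩ := hs hYs
  have hzero (i : Fin 3) (hi : stdForm s' i i = stdForm s₁ i i) : g 2 i = 0 := by
    have hsub := pullback_stdForm_sub s s₀ g i
    rw [hs', hg, hi, sub_self, eq_comm] at hsub
    simpa [sub_ne_zero.2 hne] using hsub
  exact ⟨hzero 0 rfl, hzero 1 rfl⟩

theorem IsMinimalSet.not_finite_automorphs (hY : IsMinimalSet unipotentFlow Y) (hc : IsCompact Y)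
    (hε : 0 < ε) (hYs : Y ⊆ valuesGE (stdForm s₀) ε) (hy : (y : Lattices (Fin 3)) ∈ Y) :
    ¬ (automorphs (pullback (stdForm s₀) y)).Finite := by
  intro hfin
  have hnear (i j : Fin 3) : ∀ᶠ g : SL(3, ℝ) in 𝓝 1,
      |g i j - (1 : Matrix (Fin 3) (Fin 3) ℝ) i j| < 1 / 3 := by
    have hcont : Continuous fun g : SL(3, ℝ) => |g i j - (1 : Matrix (Fin 3) (Fin 3) ℝ) i j| := by
      fun_prop
    exact hcont.continuousAt.eventually_lt_const (by simp)
  obtain ⟨g, hgU, t, ht, γ, hret, s, -, hg⟩ := hY.exists_return_ne hc hε hYs hy hfin 1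
    (eventually_all.2 fun i => eventually_all.2 (hnear i))
  obtain ⟨h20, h21⟩ := hY.triangular_of_pullback_stdForm_eq hc hε
    (hY.frequently_subset_valuesGE_stdForm hc hε hYs hy hfin)
    ⟨y, hy, smul_mem_of_return hY.prop.2.2 hy hret⟩ hg
  have h01 : g 0 1 < 1 / 3 := by simpa using (abs_lt.1 (hgU 0 1)).2
  obtain ⟨m, hm, hzero⟩ := exists_isotropic_of_return hret h20 h21 hg
    (fun i => by simpa using hgU i i) (by linarith) s₀
  exact hε.not_ge (by simpa [hzero] using mk_mem_valuesGE.1 (hYs hy) m hm)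

theorem finite_automorphs_pullback {ι : Type*} [Fintype ι] [DecidableEq ι] {B : Matrix ι ι ℝ}
    (hB : (automorphs B).Finite) (γ : SpecialLinearGroup ι ℤ) :
    (automorphs (pullback B (γ : SpecialLinearGroup ι ℝ))).Finite := by
  have hinj : Function.Injective fun δ => γ * δ * γ⁻¹ :=
    (mul_left_injective _).comp (mul_right_injective _)
  refine (hB.preimage hinj.injOn).subset fun δ (hδ : _ = _) => ?_
  change pullback B _ = B
  rw [map_mul, map_mul, map_inv, Matrix.SpecialLinearGroup.coe_mul,
    Matrix.SpecialLinearGroup.coe_mul, pullback_mul, pullback_mul, hδ, ← pullback_mul,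
    ← Matrix.SpecialLinearGroup.coe_mul, mul_inv_cancel]
  simp [pullback]

theorem exists_abs_quad_lt_of_finite_automorphs {x : SL(3, ℝ)}
    (hfin : (automorphs (pullback (stdForm s) x)).Finite) (hε : 0 < ε) :
    ∃ m : Fin 3 → ℤ, m ≠ 0 ∧ |quad (pullback (stdForm s) x) (Int.cast ∘ m)| < ε := by
  by_contra! hcon
  have hx : (x : Lattices (Fin 3)) ∈ valuesGE (stdForm s) ε := mk_mem_valuesGE.2 hcon
  have horbit : unipotentFlow.orbit (x : Lattices (Fin 3)) ⊆ valuesGE (stdForm s) ε :=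
    range_subset_iff.2 fun t => isInvariant_valuesGE_stdForm s ε t hx
  have hclosure := closure_minimal horbit (isClosed_valuesGE _ _)
  have hcompact := (isCompact_valuesGE (stdForm s) hε).of_isClosed_subset isClosed_closure hclosure
  obtain ⟨Y, hYsub, hY⟩ := exists_isMinimalSet_subset hcompact isClosed_closure
    (unipotentFlow.nonempty_orbit _).closure
    (isInvariant_closure (unipotentFlow.isInvariant_orbit _))
  have hc : IsCompact Y := hcompact.of_isClosed_subset hY.prop.1 hYsub
  obtain ⟨z, hy⟩ := hY.prop.2.1
  obtain ⟨y, rfl⟩ := QuotientGroup.mk_surjective z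
  obtain ⟨g, hg, t, hgt⟩ := exists_smul_mem_of_mem_closure (hYsub hy)
    (hY.eventually_nhds_one_exists_pullback_eq_stdForm hc hε s)
  obtain ⟨γ, hγ⟩ := smul_mk_eq_smul_mk_iff.1 hgt
  have hgy : g • (y : Lattices (Fin 3)) ∈ valuesGE (stdForm s) ε := horbit ⟨t, hgt⟩
  obtain ⟨s', hs'⟩ := hg ⟨y, hy, hgy⟩
  have hYs' : Y ⊆ valuesGE (stdForm s') ε :=
    subset_valuesGE_of_stdForm_mem_formsGE hY ⟨y, hy, hs' ▸ smul_mem_valuesGE.1 hgy⟩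
  refine hY.not_finite_automorphs hc hε hYs' hy ?_
  rw [← hs', ← pullback_mul, ← Matrix.SpecialLinearGroup.coe_mul, hγ]
  simpa only [Matrix.SpecialLinearGroup.coe_mul, pullback_mul, pullback_stdForm_unipotent] using
    finite_automorphs_pullback hfin γ

end Returns

/-! ### Diagonal forms -/

section Diagonal

variable {α : ℝ}

theorem eq_zero_and_eq_zero_of_irrational_mul_eq (hα : Irrational α) {p q : ℤ}
    (h : α * q = p) : p = 0 ∧ q = 0 := by
  have hq : q = 0 := by
    by_contra hq
    exact (hα.mul_intCast hq).ne_int p h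
  subst hq
  exact ⟨by simpa [eq_comm] using h, rfl⟩

theorem automorphs_smul {ι : Type*} [Fintype ι] [DecidableEq ι] (B : Matrix ι ι ℝ) {κ : ℝ}
    (hκ : κ ≠ 0) : automorphs (κ • B) = automorphs B := by
  ext γ
  simp only [automorphs, pullback, Matrix.mul_smul, Matrix.smul_mul, mem_ofPred_eq,
    (smul_right_injective _ hκ).eq_iff]

theorem sq_apply_le_one_of_mem_automorphs (hα : Irrational α) {γ : SL(3, ℤ)}
    (hγ : γ ∈ automorphs (Matrix.diagonal ![1, 1, -α])) (i j : Fin 3) : γ i j ^ 2 ≤ 1 := by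
  obtain ⟨e, f, he, hf, hentry⟩ : ∃ e f : ℤ, e ≤ 1 ∧ f ≤ 1 ∧
      (Matrix.diagonal ![1, 1, -α] : Matrix (Fin 3) (Fin 3) ℝ) j j = e - α * f := by
    fin_cases j
    exacts [⟨1, 0, by simp⟩, ⟨1, 0, by simp⟩, ⟨0, 1, by simp⟩]
  have hcol : (γ 0 j : ℝ) ^ 2 + (γ 1 j : ℝ) ^ 2 - α * (γ 2 j : ℝ) ^ 2 = e - α * f := by
    rw [← hentry, ← show pullback _ _ = Matrix.diagonal ![1, 1, -α] from hγ]
    simp [pullback, mul_apply, Fin.sum_univ_three, Matrix.diagonal_apply]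
    ring
  obtain ⟨hp, hq⟩ := eq_zero_and_eq_zero_of_irrational_mul_eq hα
    (p := γ 0 j ^ 2 + γ 1 j ^ 2 - e) (q := γ 2 j ^ 2 - f) (by push_cast; linarith)
  have h0 := sq_nonneg (γ 0 j)
  have h1 := sq_nonneg (γ 1 j)
  fin_cases i
  exacts [show γ 0 j ^ 2 ≤ 1 by omega, show γ 1 j ^ 2 ≤ 1 by omega, show γ 2 j ^ 2 ≤ 1 by omega]

theorem finite_automorphs_diagonal (hα : Irrational α) :
    (automorphs (Matrix.diagonal ![1, 1, -α])).Finite := by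
  have hbox : {A : Matrix (Fin 3) (Fin 3) ℤ | ∀ i j, A i j ∈ Icc (-1) 1}.Finite :=
    Set.Finite.pi' fun _ => Set.Finite.pi' fun _ => finite_Icc _ _
  refine (hbox.preimage Subtype.val_injective.injOn).subset fun γ hγ i j => ?_
  exact abs_le.1 (sq_le_one_iff_abs_le_one _ |>.1 (sq_apply_le_one_of_mem_automorphs hα hγ i j))

theorem exists_pullback_stdForm_eq_smul_diagonal (hα : 0 < α) :
    ∃ κ > (0 : ℝ), ∃ x : SL(3, ℝ), pullback (stdForm 0) x = κ • Matrix.diagonal ![1, 1, -α] := by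
  obtain ⟨κ, hκ, hκα⟩ : ∃ κ : ℝ, 0 < κ ∧ κ ^ 3 * α = 1 := by
    refine ⟨α⁻¹ ^ ((3 : ℕ) : ℝ)⁻¹, by positivity, ?_⟩
    rw [Real.rpow_inv_natCast_pow (by positivity) three_ne_zero, inv_mul_cancel₀ hα.ne']
  set a := √(κ / 2)
  set b := √κ
  set r := √α
  have ha : a ^ 2 = κ / 2 := Real.sq_sqrt (by positivity)
  have hb : b ^ 2 = κ := Real.sq_sqrt hκ.le
  have hr : r ^ 2 = α := Real.sq_sqrt hα.le
  have hκbr : κ * b * r = 1 := by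
    rw [← sq_eq_sq₀ (by positivity) zero_le_one, mul_pow, mul_pow, hb, hr]
    linear_combination hκα
  let x : SL(3, ℝ) := ⟨!![a, 0, a * r; 0, b, 0; -a, 0, a * r], by
    simp [det_fin_three]
    linear_combination hκbr + 2 * b * r * ha⟩
  refine ⟨κ, hκ, x, ?_⟩
  ext i j
  fin_cases i <;> fin_cases j <;>
    simp [x, pullback, stdForm, mul_apply, Fin.sum_univ_three]
  · linear_combination 2 * ha
  · linear_combination hb
  · linear_combination -2 * r ^ 2 * ha - κ * hr

end Diagonal

end Oppenheim

/-- Oppenheim conjecture for the diagonal ternary form `Q_α(x,y,z) = x² + y² − α z²`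
with `α > 0` irrational. -/
theorem oppenheim_diagonal_ternary (ε : ℝ) (hε : 0 < ε) (α : ℝ) (hα : 0 < α)
    (hirr : Irrational α) :
    ∃ x y z : ℤ, ¬(x = 0 ∧ y = 0 ∧ z = 0) ∧
      |(x : ℝ) ^ 2 + (y : ℝ) ^ 2 - α * (z : ℝ) ^ 2| ≤ ε := by
  obtain ⟨κ, hκ, x, hx⟩ := Oppenheim.exists_pullback_stdForm_eq_smul_diagonal hα
  have hfin : (Oppenheim.automorphs (Oppenheim.pullback (Oppenheim.stdForm 0) x)).Finite := by
    rw [hx, Oppenheim.automorphs_smul _ hκ.ne']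
    exact Oppenheim.finite_automorphs_diagonal hirr
  obtain ⟨m, hm, hlt⟩ := Oppenheim.exists_abs_quad_lt_of_finite_automorphs hfin (mul_pos hκ hε)
  refine ⟨m 0, m 1, m 2, fun ⟨h0, h1, h2⟩ => hm ?_, ?_⟩
  · ext i
    fin_cases i <;> assumption
  rw [hx, Oppenheim.quad_smul_left, Oppenheim.quad_diagonal, abs_mul, abs_of_pos hκ,
    mul_lt_mul_iff_right₀ hκ] at hlt
  simpa [Fin.sum_univ_three, ← sub_eq_add_neg] using hlt.le
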